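/- Let n > 1 and let K, L ⊆ ℝⁿ be strictly convex bodies with cross covariogram g = g_{K,L} satisfying max_x g(x) < min{vol(K), vol(L)}. Then g attains its maximum at a unique point, and for every t with 0 < t ≤ max g, the superlevel set {x ∈ ℝⁿ : g(x) ≥ t} is strictly convex: for all distinct x, y in it and every s ∈ (0,1), g((1−s)x + sy) > t. -/

import Mathlib

open MeasureTheory Set Pointwise
open scoped ENNReal

/-- The one-dimensional Brunn–Minkowski inequality. -/
theorem Real.volume_add_volume_le_of_add_subset {A B C : Set ℝ} (hA : MeasurableSet A)
    (hB : MeasurableSet B) (hA0 : A.Nonempty) (hB0 : B.Nonempty) (h : A + B ⊆ C) :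
    volume A + volume B ≤ volume C := by
  have key : ∀ P ⊆ A, IsCompact P → ∀ Q ⊆ B, IsCompact Q → volume P + volume Q ≤ volume C := by
    intro P hPA hP Q hQB hQ
    rcases P.eq_empty_or_nonempty with rfl | hP0
    · obtain ⟨a, ha⟩ := hA0
      have : a +ᵥ Q ⊆ C := by
        rintro _ ⟨q, hq, rfl⟩
        exact h (add_mem_add ha (hQB hq))
      simpa using measure_mono (μ := volume) this
    rcases Q.eq_empty_or_nonempty with rfl | hQ0
    · obtain ⟨b, hb⟩ := hB0
      have : b +ᵥ P ⊆ C := by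
        rintro _ ⟨p, hp, rfl⟩
        simpa [add_comm] using h (add_mem_add (hPA hp) hb)
      simpa using measure_mono (μ := volume) this
    obtain ⟨M, hM, hPM⟩ := hP.exists_isGreatest hP0
    obtain ⟨m, hm, hQm⟩ := hQ.exists_isLeast hQ0
    have hsub : (m +ᵥ P) ∪ (M +ᵥ Q) ⊆ C := by
      rintro _ (⟨p, hp, rfl⟩ | ⟨q, hq, rfl⟩)
      · simpa [add_comm] using h (add_mem_add (hPA hp) (hQB hm))
      · exact h (add_mem_add (hPA hM) (hQB hq))
    have hdisj : AEDisjoint volume (m +ᵥ P) (M +ᵥ Q) := by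
      refine measure_mono_null (t := {M + m}) ?_ (by simp)
      rintro x ⟨⟨p, hp, rfl⟩, q, hq, hpq⟩
      have h1 := hPM hp
      have h2 := hQm hq
      simp only [vadd_eq_add, mem_singleton_iff] at hpq ⊢
      linarith
    calc volume P + volume Q = volume (m +ᵥ P) + volume (M +ᵥ Q) := by simp
      _ = volume ((m +ᵥ P) ∪ (M +ᵥ Q)) :=
        (measure_union₀ ((hQ.vadd M).measurableSet.nullMeasurableSet) hdisj).symm
      _ ≤ volume C := measure_mono hsub
  rw [hA.measure_eq_iSup_isCompact, hB.measure_eq_iSup_isCompact]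
  simp only [iSup_and']
  exact ENNReal.biSup_add_biSup_le' ⟨∅, empty_subset _, isCompact_empty⟩
    ⟨∅, empty_subset _, isCompact_empty⟩ fun P hP Q hQ => key P hP.1 hP.2 Q hQ.1 hQ.2

theorem ENNReal.rpow_mul_rpow_le_add {a b : ℝ} (ha : 0 < a) (hb : 0 < b) (hab : a + b = 1)
    (x y : ℝ≥0∞) : x ^ a * y ^ b ≤ ENNReal.ofReal a * x + ENNReal.ofReal b * y := by
  have hpq : (a⁻¹).HolderConjugate b⁻¹ := by
    rw [Real.holderConjugate_iff]
    exact ⟨(one_lt_inv₀ ha).2 (by linarith), by simpa using hab⟩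
  have := ENNReal.young_inequality (x ^ a) (y ^ b) hpq
  rwa [← ENNReal.rpow_mul, ← ENNReal.rpow_mul, mul_inv_cancel₀ ha.ne', mul_inv_cancel₀ hb.ne',
    ENNReal.rpow_one, ENNReal.rpow_one, ENNReal.ofReal_inv_of_pos ha, ENNReal.ofReal_inv_of_pos hb,
    div_eq_mul_inv, div_eq_mul_inv, inv_inv, inv_inv, mul_comm x, mul_comm y] at this

theorem lintegral_eq_lintegral_meas_ofReal_lt {α : Type*} [MeasurableSpace α] (μ : Measure α)
    {f : α → ℝ≥0∞} (hf : Measurable f) (hf' : ∀ x, f x ≠ ∞) :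
    ∫⁻ x, f x ∂μ = ∫⁻ t in Ioi (0 : ℝ), μ {x | ENNReal.ofReal t < f x} := by
  have := lintegral_eq_lintegral_meas_lt μ (f := fun x => (f x).toReal)
    (Filter.Eventually.of_forall fun _ => ENNReal.toReal_nonneg) hf.ennreal_toReal.aemeasurable
  simp only [ENNReal.ofReal_toReal (hf' _)] at this
  rw [this]
  refine setLIntegral_congr_fun measurableSet_Ioi fun t ht => ?_
  simp only [ENNReal.ofReal_lt_iff_lt_toReal (le_of_lt ht) (hf' _)]

theorem add_lintegral_le_of_iSup_eq_one {a b : ℝ} (ha : 0 < a) (hb : 0 < b) (hab : a + b = 1)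
    {f g h : ℝ → ℝ≥0∞} (hf : Measurable f) (hg : Measurable g) (hh : Measurable h)
    (hf1 : ⨆ x, f x = 1) (hg1 : ⨆ x, g x = 1)
    (H : ∀ x y, f x ^ a * g y ^ b ≤ h (a * x + b * y)) :
    ENNReal.ofReal a * (∫⁻ x, f x) + ENNReal.ofReal b * (∫⁻ x, g x) ≤ ∫⁻ x, h x := by
  have hfle : ∀ x, f x ≤ 1 := fun x => hf1 ▸ le_iSup f x
  have hgle : ∀ x, g x ≤ 1 := fun x => hg1 ▸ le_iSup g x
  have hf0 : ∀ x, f x ≠ ∞ := fun x => ne_top_of_le_ne_top ENNReal.one_ne_top (hfle x)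
  have hg0 : ∀ x, g x ≠ ∞ := fun x => ne_top_of_le_ne_top ENNReal.one_ne_top (hgle x)
  have hmeas : ∀ {k : ℝ → ℝ≥0∞} (_ : Measurable k) (t : ℝ≥0∞), MeasurableSet {x | t < k x} :=
    fun hk t => measurableSet_lt measurable_const hk
  calc ENNReal.ofReal a * (∫⁻ x, f x) + ENNReal.ofReal b * (∫⁻ x, g x)
      ≤ ∫⁻ t in Ioi (0 : ℝ), (ENNReal.ofReal a * volume {x | ENNReal.ofReal t < f x} +
          ENNReal.ofReal b * volume {x | ENNReal.ofReal t < g x}) := by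
        rw [lintegral_eq_lintegral_meas_ofReal_lt _ hf hf0,
          lintegral_eq_lintegral_meas_ofReal_lt _ hg hg0,
          ← lintegral_const_mul' _ _ ENNReal.ofReal_ne_top,
          ← lintegral_const_mul' _ _ ENNReal.ofReal_ne_top]
        exact le_lintegral_add _ _
    _ ≤ ∫⁻ t in Ioi (0 : ℝ), volume {x | ENNReal.ofReal t < min (h x) 1} := by
        refine setLIntegral_mono' measurableSet_Ioi fun t ht => ?_
        have ht0 : ENNReal.ofReal t ≠ 0 := by simpa using ht
        rcases le_or_gt 1 (ENNReal.ofReal t) with ht1 | ht1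
        · have e1 : {x | ENNReal.ofReal t < f x} = ∅ := by
            ext x; simpa using (hfle x).trans ht1
          have e2 : {x | ENNReal.ofReal t < g x} = ∅ := by
            ext x; simpa using (hgle x).trans ht1
          simp [e1, e2]
        have hsm : ∀ {c : ℝ} (_ : 0 < c) (S : Set ℝ),
            ENNReal.ofReal c * volume S = volume (c • S) := fun hc S => by
          rw [Measure.addHaar_smul]; simp [abs_of_pos hc]
        rw [hsm ha, hsm hb]
        refine Real.volume_add_volume_le_of_add_subset ((hmeas hf _).const_smul₀ a)
          ((hmeas hg _).const_smul₀ b) ?_ ?_ ?_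
        · rw [← hf1] at ht1
          exact Set.Nonempty.smul_set (lt_iSup_iff.1 ht1)
        · rw [← hg1] at ht1
          exact Set.Nonempty.smul_set (lt_iSup_iff.1 ht1)
        · rintro _ ⟨_, ⟨x, hx, rfl⟩, _, ⟨y, hy, rfl⟩, rfl⟩
          refine lt_min (lt_of_lt_of_le ?_ (H x y)) ht1
          calc ENNReal.ofReal t = ENNReal.ofReal t ^ a * ENNReal.ofReal t ^ b := by
                rw [← ENNReal.rpow_add _ _ ht0 ENNReal.ofReal_ne_top, hab, ENNReal.rpow_one]
            _ < f x ^ a * g y ^ b :=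
                ENNReal.mul_lt_mul (ENNReal.rpow_lt_rpow hx ha) (ENNReal.rpow_lt_rpow hy hb)
    _ = ∫⁻ x, min (h x) 1 := (lintegral_eq_lintegral_meas_ofReal_lt _ (hh.min measurable_const)
        fun x => ne_top_of_le_ne_top ENNReal.one_ne_top (min_le_right _ _)).symm
    _ ≤ ∫⁻ x, h x := lintegral_mono fun x => min_le_left _ _

theorem prekopaLeindler_real_of_bounded {a b : ℝ} (ha : 0 < a) (hb : 0 < b) (hab : a + b = 1)
    {f g h : ℝ → ℝ≥0∞} (hf : Measurable f) (hg : Measurable g) (hh : Measurable h)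
    (hf1 : ⨆ x, f x ≠ ∞) (hg1 : ⨆ x, g x ≠ ∞)
    (H : ∀ x y, f x ^ a * g y ^ b ≤ h (a * x + b * y)) :
    (∫⁻ x, f x) ^ a * (∫⁻ x, g x) ^ b ≤ ∫⁻ x, h x := by
  set α := ⨆ x, f x with hα
  set β := ⨆ x, g x with hβ
  rcases eq_or_ne α 0 with h0 | hα0
  · have : ∀ x, f x = 0 := by simpa [hα] using h0
    simp [this, ha]
  rcases eq_or_ne β 0 with h0 | hβ0
  · have : ∀ x, g x = 0 := by simpa [hβ] using h0
    simp [this, hb]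
  have e : ∀ x y : ℝ≥0∞, (α⁻¹ * x) ^ a * (β⁻¹ * y) ^ b = (α ^ a * β ^ b)⁻¹ * (x ^ a * y ^ b) := by
    intro x y
    rw [ENNReal.mul_rpow_of_nonneg _ _ ha.le, ENNReal.mul_rpow_of_nonneg _ _ hb.le,
      ENNReal.inv_rpow, ENNReal.inv_rpow, ENNReal.mul_inv (by simp [hα0, hf1])
      (by simp [ha.le, hf1])]
    ring
  have hc0 : α ^ a * β ^ b ≠ 0 := by simp [hα0, hβ0, hf1, hg1]
  have hct : α ^ a * β ^ b ≠ ∞ :=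
    ENNReal.mul_ne_top (by simp [hf1, hα0]) (by simp [hg1, hβ0])
  have := (ENNReal.rpow_mul_rpow_le_add ha hb hab _ _).trans
    (add_lintegral_le_of_iSup_eq_one ha hb hab (f := fun x => α⁻¹ * f x) (g := fun x => β⁻¹ * g x)
    (h := fun x => (α ^ a * β ^ b)⁻¹ * h x) (hf.const_mul _) (hg.const_mul _) (hh.const_mul _)
    (by rw [← ENNReal.mul_iSup, ENNReal.inv_mul_cancel hα0 hf1])
    (by rw [← ENNReal.mul_iSup, ENNReal.inv_mul_cancel hβ0 hg1])
    (fun x y => by rw [e]; gcongr; exact H x y))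
  rw [lintegral_const_mul _ hf, lintegral_const_mul _ hg, lintegral_const_mul _ hh, e] at this
  exact (ENNReal.mul_le_mul_iff_right (ENNReal.inv_ne_zero.2 hct) (ENNReal.inv_ne_top.2 hc0)).1 this

/-- The Prékopa–Leindler inequality on the real line. -/
theorem prekopaLeindler_real {a b : ℝ} (ha : 0 < a) (hb : 0 < b) (hab : a + b = 1)
    {f g h : ℝ → ℝ≥0∞} (hf : Measurable f) (hg : Measurable g) (hh : Measurable h)
    (H : ∀ x y, f x ^ a * g y ^ b ≤ h (a * x + b * y)) :
    (∫⁻ x, f x) ^ a * (∫⁻ x, g x) ^ b ≤ ∫⁻ x, h x := by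
  rcases eq_or_ne (∫⁻ x, f x) 0 with h0 | hf0
  · simp [h0, ha]
  rcases eq_or_ne (∫⁻ x, g x) 0 with h0 | hg0
  · simp [h0, hb]
  have key : ∀ {k : ℝ → ℝ≥0∞} (_ : Measurable k),
      Filter.Tendsto (fun N : ℕ => ∫⁻ x, min (k x) N) Filter.atTop (nhds (∫⁻ x, k x)) := by
    intro k hk
    refine lintegral_tendsto_of_tendsto_of_monotone (fun N => by fun_prop)
      (Filter.Eventually.of_forall fun x N M hNM => by dsimp only; gcongr)
      (Filter.Eventually.of_forall fun x => ?_)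
    simpa using (tendsto_const_nhds (x := k x)).min ENNReal.tendsto_nat_nhds_top
  refine le_of_tendsto' (ENNReal.Tendsto.mul ((key hf).ennrpow_const a)
    (Or.inl (by simp [hf0, ha.le, ha])) ((key hg).ennrpow_const b)
    (Or.inl (by simp [hg0, hb.le, hb]))) fun N => ?_
  refine prekopaLeindler_real_of_bounded ha hb hab (by fun_prop) (by fun_prop) hh
    (ne_top_of_le_ne_top (ENNReal.natCast_ne_top N) (iSup_le fun x => min_le_right _ _))
    (ne_top_of_le_ne_top (ENNReal.natCast_ne_top N) (iSup_le fun x => min_le_right _ _))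
    fun x y => le_trans ?_ (H x y)
  gcongr <;> exact min_le_left _ _

/-- The Prékopa–Leindler inequality. -/
theorem prekopaLeindler {a b : ℝ} (ha : 0 < a) (hb : 0 < b) (hab : a + b = 1) (n : ℕ)
    {f g h : (Fin n → ℝ) → ℝ≥0∞} (hf : Measurable f) (hg : Measurable g) (hh : Measurable h)
    (H : ∀ x y, f x ^ a * g y ^ b ≤ h (a • x + b • y)) :
    (∫⁻ x, f x) ^ a * (∫⁻ x, g x) ^ b ≤ ∫⁻ x, h x := by
  induction n with
  | zero =>
    simp only [volume_pi, Measure.pi_of_empty _ (0 : Fin 0 → ℝ), lintegral_dirac]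
    convert H 0 0
  | succ n ih =>
    have e := (volume_preserving_piFinSuccAbove (fun _ : Fin (n + 1) => ℝ) 0).symm
    have hm := e.measurable
    have key : ∀ {k : (Fin (n + 1) → ℝ) → ℝ≥0∞} (_ : Measurable k),
        ∫⁻ x, k x = ∫⁻ u : ℝ, ∫⁻ v : Fin n → ℝ,
          k ((MeasurableEquiv.piFinSuccAbove (fun _ : Fin (n + 1) => ℝ) 0).symm (u, v)) := by
      intro k hk
      rw [← e.lintegral_comp hk]
      exact lintegral_prod _ (hk.comp hm).aemeasurable
    rw [key hf, key hg, key hh]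
    refine prekopaLeindler_real ha hb hab (hf.comp hm).lintegral_prod_right'
      (hg.comp hm).lintegral_prod_right' (hh.comp hm).lintegral_prod_right' fun u v => ?_
    refine ih ((hf.comp hm).comp measurable_prodMk_left) ((hg.comp hm).comp measurable_prodMk_left)
      ((hh.comp hm).comp measurable_prodMk_left) fun x y => ?_
    refine (H _ _).trans_eq (congrArg h ?_)
    ext i
    refine Fin.cases ?_ (fun j => ?_) i <;>
      simp [MeasurableEquiv.piFinSuccAbove]

/-- A multiplicative form of the Brunn–Minkowski inequality. -/
theorem EuclideanSpace.volume_rpow_mul_volume_rpow_le {a b : ℝ} (ha : 0 < a) (hb : 0 < b)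
    (hab : a + b = 1) {n : ℕ} {A B C : Set (EuclideanSpace ℝ (Fin n))} (hA : MeasurableSet A)
    (hB : MeasurableSet B) (hC : MeasurableSet C) (h : ∀ x ∈ A, ∀ y ∈ B, a • x + b • y ∈ C) :
    volume A ^ a * volume B ^ b ≤ volume C := by
  have e := PiLp.volume_preserving_toLp (Fin n)
  have key : ∀ {S : Set (EuclideanSpace ℝ (Fin n))} (_ : MeasurableSet S),
      volume S = ∫⁻ x : Fin n → ℝ, S.indicator 1 (WithLp.toLp 2 x) := fun {S} hS => by
    rw [e.lintegral_comp (measurable_one.indicator hS), lintegral_indicator_one hS]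
  rw [key hA, key hB, key hC]
  refine prekopaLeindler ha hb hab n ((measurable_one.indicator hA).comp e.measurable)
    ((measurable_one.indicator hB).comp e.measurable)
    ((measurable_one.indicator hC).comp e.measurable) fun x y => ?_
  by_cases hx : WithLp.toLp 2 x ∈ A
  · by_cases hy : WithLp.toLp 2 y ∈ B
    · have := h _ hx _ hy
      simp [hx, hy, this]
    · simp [hy, hb]
  · simp [hx, ha]

theorem Convex.isPreconnected_frontier {E : Type*} [NormedAddCommGroup E] [NormedSpace ℝ E]
    (hE : 1 < Module.rank ℝ E) {C : Set E} (hC : Convex ℝ C) (hne : (interior C).Nonempty)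
    (hb : Bornology.IsBounded C) : IsPreconnected (frontier C) := by
  obtain ⟨φ, -, -, hφ⟩ := exists_homeomorph_image_interior_closure_frontier_eq_unitBall hC hne hb
  rw [← φ.isPreconnected_image, hφ]
  exact isPreconnected_sphere hE 0 1

theorem Convex.eq_of_subset_of_frontier_subset {E : Type*} [NormedAddCommGroup E]
    [NormedSpace ℝ E] {C M : Set E} (hM : Convex ℝ M) (hMc : IsClosed M) (hCc : IsClosed C)
    (hCM : C ⊆ M) (hne : (interior C).Nonempty) (h : frontier C ⊆ frontier M) : C = M := by
  have hneM : (interior M).Nonempty := hne.mono (interior_mono hCM)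
  refine hCM.antisymm ?_
  have hint : interior M ⊆ C := by
    by_contra hcon
    obtain ⟨x, hxM, hxC⟩ := not_subset.1 hcon
    obtain ⟨c, hc⟩ := hne
    obtain ⟨y, -, hyC, hyC'⟩ := hM.interior.isPreconnected (interior C) Cᶜ isOpen_interior
      hCc.isOpen_compl (fun y hy => or_iff_not_imp_left.2 fun hyi hyC =>
        (h ⟨subset_closure hyC, hyi⟩).2 hy) ⟨c, interior_mono hCM hc, hc⟩ ⟨x, hxM, hxC⟩
    exact hyC' (interior_subset hyC)
  calc M = closure (interior M) := by
        rw [hM.closure_interior_eq_closure_of_nonempty_interior hneM, hMc.closure_eq]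
    _ ⊆ C := closure_minimal hint hCc

theorem continuous_volume_inter_vadd {E : Type*} [NormedAddCommGroup E] [NormedSpace ℝ E]
    [FiniteDimensional ℝ E] [MeasurableSpace E] [BorelSpace E] (μ : Measure E)
    [μ.IsAddHaarMeasure] {K L : Set E} (hK : IsCompact K) (hLc : IsClosed L) (hL : Convex ℝ L) :
    Continuous fun x : E => (μ (K ∩ (x +ᵥ L))).toReal := by
  refine continuous_iff_continuousAt.2 fun x => ?_
  have hmeas : ∀ y : E, MeasurableSet (K ∩ (y +ᵥ L)) := fun y =>
    (hK.isClosed.inter (hLc.vadd y)).measurableSet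
  refine (ENNReal.tendsto_toReal (measure_ne_top_of_subset inter_subset_left
    hK.measure_lt_top.ne)).comp (tendsto_measure_of_ae_tendsto_indicator _ (hmeas x) hmeas
    hK.measurableSet hK.measure_lt_top.ne (Filter.Eventually.of_forall fun _ => inter_subset_left)
    ?_)
  have hnull : μ (x +ᵥ frontier L) = 0 := by rw [measure_vadd, hL.addHaar_frontier μ]
  filter_upwards [measure_eq_zero_iff_ae_notMem.1 hnull] with u hu
  have hcont : Filter.Tendsto (fun y => u - y) (nhds x) (nhds (u - x)) :=
    (continuous_const.sub continuous_id).tendsto x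
  simp only [mem_inter_iff, mem_vadd_set_iff_neg_vadd_mem, vadd_eq_add, neg_add_eq_sub] at hu ⊢
  by_cases hux : u - x ∈ L
  · have hint : u - x ∈ interior L := by
      by_contra hcon
      exact hu ⟨subset_closure hux, hcon⟩
    filter_upwards [hcont (isOpen_interior.mem_nhds hint)] with y hy
    simp [hux, interior_subset (show u - y ∈ interior L from hy)]
  · filter_upwards [hcont (hLc.isOpen_compl.mem_nhds hux)] with y hy
    simp [hux, show u - y ∉ L from hy]

theorem Convex.interior_nonempty_of_measure_ne_zero {E : Type*} [NormedAddCommGroup E]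
    [NormedSpace ℝ E] [FiniteDimensional ℝ E] [MeasurableSpace E] [BorelSpace E] (μ : Measure E)
    [μ.IsAddHaarMeasure] {C : Set E} (hC : Convex ℝ C) (h : μ C ≠ 0) :
    (interior C).Nonempty := by
  by_contra hcon
  rw [not_nonempty_iff_eq_empty] at hcon
  refine h (measure_mono_null subset_closure ?_)
  rw [← hC.addHaar_frontier μ, frontier, hcon, sdiff_empty]

theorem Convex.subset_of_measure_diff_eq_zero {E : Type*} [NormedAddCommGroup E]
    [NormedSpace ℝ E] [MeasurableSpace E] (μ : Measure E) [μ.IsOpenPosMeasure] {C D : Set E}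
    (hC : Convex ℝ C) (hne : (interior C).Nonempty) (hD : IsClosed D) (h : μ (C \ D) = 0) :
    C ⊆ D := by
  have hint : interior C ⊆ D := by
    rw [← sdiff_eq_empty, ← (isOpen_interior.sdiff hD).measure_eq_zero_iff μ]
    exact measure_mono_null (sdiff_subset_sdiff_left interior_subset) h
  calc C ⊆ closure C := subset_closure
    _ = closure (interior C) := (hC.closure_interior_eq_closure_of_nonempty_interior hne).symm
    _ ⊆ D := closure_minimal hint hD

/-- If a convex combination with positive weights of two points of a strictly convex set lies on
the frontier, then the two points coincide. -/
theorem StrictConvex.eq_of_combo_mem_frontier {E : Type*} [NormedAddCommGroup E]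
    [NormedSpace ℝ E] {K : Set E} (hK : StrictConvex ℝ K) {a b : ℝ} (ha : 0 < a) (hb : 0 < b)
    (hab : a + b = 1) {p q : E} (hp : p ∈ K) (hq : q ∈ K) (h : a • p + b • q ∈ frontier K) :
    p = q := by
  by_contra hpq
  exact h.2 (hK hp hq hpq ha hb hab)

/-- The cross covariogram of strictly convex bodies is strictly quasi-concave at points where it is
positive and smaller than the volumes of both bodies. -/
theorem lt_volume_inter_vadd_combo {n : ℕ} (hn : 1 < n) {K L : Set (EuclideanSpace ℝ (Fin n))}
    (hKc : IsCompact K) (hK : StrictConvex ℝ K) (hLc : IsCompact L) (hL : StrictConvex ℝ L)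
    {a b : ℝ} (ha : 0 < a) (hb : 0 < b) (hab : a + b = 1) {x y : EuclideanSpace ℝ (Fin n)}
    (hxy : x ≠ y) (hCK : volume (K ∩ ((a • x + b • y) +ᵥ L)) < volume K)
    (hCL : volume (K ∩ ((a • x + b • y) +ᵥ L)) < volume L) {t : ENNReal} (ht : t ≠ 0)
    (hx : t ≤ volume (K ∩ (x +ᵥ L))) (hy : t ≤ volume (K ∩ (y +ᵥ L))) :
    t < volume (K ∩ ((a • x + b • y) +ᵥ L)) := by
  set z := a • x + b • y with hz
  set A := K ∩ (x +ᵥ L)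
  set B := K ∩ (y +ᵥ L)
  set C := K ∩ (z +ᵥ L)
  have hA : IsCompact A := hKc.inter_right (hLc.isClosed.vadd x)
  have hB : IsCompact B := hKc.inter_right (hLc.isClosed.vadd y)
  have hC : IsCompact C := hKc.inter_right (hLc.isClosed.vadd z)
  have hCconv : Convex ℝ C := hK.convex.inter (hL.convex.vadd z)
  have htop : t ≠ ∞ := ne_top_of_le_ne_top hA.measure_lt_top.ne hx
  set D := a • A + b • B
  have hD : IsCompact D := (hA.smul a).add (hB.smul b)
  have hsplit : ∀ p q : EuclideanSpace ℝ (Fin n),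
      -z + (a • p + b • q) = a • (-x + p) + b • (-y + q) := fun p q => by
    rw [hz]; module
  have hDC : D ⊆ C := by
    rintro _ ⟨_, ⟨p, hp, rfl⟩, _, ⟨q, hq, rfl⟩, rfl⟩
    refine ⟨hK.convex hp.1 hq.1 ha.le hb.le hab, ?_⟩
    have hp2 := mem_vadd_set_iff_neg_vadd_mem.1 hp.2
    have hq2 := mem_vadd_set_iff_neg_vadd_mem.1 hq.2
    rw [mem_vadd_set_iff_neg_vadd_mem, vadd_eq_add]
    dsimp only
    rw [hsplit]
    exact hL.convex hp2 hq2 ha.le hb.le hab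
  have htD : t ≤ volume D := calc
    t = t ^ a * t ^ b := by rw [← ENNReal.rpow_add _ _ ht htop, hab, ENNReal.rpow_one]
    _ ≤ volume A ^ a * volume B ^ b := by gcongr
    _ ≤ volume D := EuclideanSpace.volume_rpow_mul_volume_rpow_le ha hb hab hA.measurableSet
      hB.measurableSet hD.measurableSet fun p hp q hq =>
        add_mem_add (smul_mem_smul_set hp) (smul_mem_smul_set hq)
  by_contra! hcon
  have hne : (interior C).Nonempty := hCconv.interior_nonempty_of_measure_ne_zero volume
    (((pos_iff_ne_zero.2 ht).trans_le (htD.trans (measure_mono hDC))).ne')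
  have hCD : C ⊆ D := by
    refine hCconv.subset_of_measure_diff_eq_zero volume hne hD.isClosed ?_
    rw [measure_sdiff hDC hD.measurableSet.nullMeasurableSet hD.measure_lt_top.ne]
    exact tsub_eq_zero_of_le (hcon.trans htD)
  have hfr : frontier C ⊆ frontier K ∪ frontier (z +ᵥ L) :=
    (frontier_inter_subset _ _).trans
      (union_subset_union inter_subset_left inter_subset_right)
  have hrank : 1 < Module.rank ℝ (EuclideanSpace ℝ (Fin n)) := by
    rw [← Module.finrank_eq_rank, finrank_euclideanSpace_fin]
    exact_mod_cast hn
  have hcapK : (frontier C ∩ frontier K).Nonempty := by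
    by_contra hcap
    rw [← disjoint_iff_inter_eq_empty.trans not_nonempty_iff_eq_empty.symm] at hcap
    have := (hL.convex.vadd z).eq_of_subset_of_frontier_subset (hLc.isClosed.vadd z) hC.isClosed
      inter_subset_right hne (hcap.subset_right_of_subset_union hfr)
    rw [this, measure_vadd] at hCL
    exact hCL.false
  have hcapL : (frontier C ∩ frontier (z +ᵥ L)).Nonempty := by
    by_contra hcap
    rw [← disjoint_iff_inter_eq_empty.trans not_nonempty_iff_eq_empty.symm] at hcap
    have := hK.convex.eq_of_subset_of_frontier_subset hKc.isClosed hC.isClosed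
      inter_subset_left hne (hcap.subset_left_of_subset_union hfr)
    rw [this] at hCK
    exact hCK.false
  obtain ⟨c, hc, hcK, hcL⟩ := isPreconnected_closed_iff.1
    (hCconv.isPreconnected_frontier hrank hne hC.isBounded) _ _ isClosed_frontier isClosed_frontier
    hfr hcapK hcapL
  obtain ⟨_, ⟨p, hp, rfl⟩, _, ⟨q, hq, rfl⟩, rfl⟩ := hCD (hC.isClosed.frontier_subset hc)
  have hpq : p = q := hK.eq_of_combo_mem_frontier ha hb hab hp.1 hq.1 hcK
  have hpq' : -x + p = -y + q := by
    refine hL.eq_of_combo_mem_frontier ha hb hab (mem_vadd_set_iff_neg_vadd_mem.1 hp.2)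
      (mem_vadd_set_iff_neg_vadd_mem.1 hq.2) ?_
    rw [← hsplit]
    have : z +ᵥ frontier L = frontier (z +ᵥ L) := (Homeomorph.vadd z).image_frontier L
    rw [← this] at hcL
    exact mem_vadd_set_iff_neg_vadd_mem.1 hcL
  subst hpq
  exact hxy (neg_injective (add_right_cancel hpq'))

/-- Consequence of Theorem 1.1: for strictly convex bodies with
`max g < min {|K|, |L|}`, the cross covariogram attains its maximum at a unique point and
all its superlevel sets at positive heights are strictly convex. -/
theorem covariogram_unique_max_and_strict_level_sets
    (n : ℕ) (hn : 1 < n)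
    (K L : Set (EuclideanSpace ℝ (Fin n)))
    (hKcomp : IsCompact K) (hKconv : Convex ℝ K) (hKint : (interior K).Nonempty)
    (hKstrict : StrictConvex ℝ K)
    (hLcomp : IsCompact L) (hLconv : Convex ℝ L) (hLint : (interior L).Nonempty)
    (hLstrict : StrictConvex ℝ L)
    (g : EuclideanSpace ℝ (Fin n) → ℝ)
    (hg : ∀ x, g x = (volume (K ∩ (x +ᵥ L))).toReal)
    (hmax : ∀ x, g x < min (volume K).toReal (volume L).toReal) :
    (∃! x : EuclideanSpace ℝ (Fin n), ∀ y, g y ≤ g x) ∧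
    (∀ t : ℝ, 0 < t → (∃ x, t ≤ g x) →
      ∀ x y : EuclideanSpace ℝ (Fin n), x ≠ y → t ≤ g x → t ≤ g y →
        ∀ s ∈ Ioo (0 : ℝ) 1, t < g ((1 - s) • x + s • y)) := by
  have hfin : ∀ x : EuclideanSpace ℝ (Fin n), volume (K ∩ (x +ᵥ L)) ≠ ∞ := fun x =>
    measure_ne_top_of_subset inter_subset_left hKcomp.measure_lt_top.ne
  have hlevel : ∀ t : ℝ, 0 < t → ∀ x y : EuclideanSpace ℝ (Fin n), x ≠ y → t ≤ g x → t ≤ g y →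
      ∀ s ∈ Ioo (0 : ℝ) 1, t < g ((1 - s) • x + s • y) := by
    intro t ht x y hxy hx hy s hs
    have hz := hmax ((1 - s) • x + s • y)
    rw [hg, lt_min_iff, ENNReal.toReal_lt_toReal (hfin _) hKcomp.measure_lt_top.ne,
      ENNReal.toReal_lt_toReal (hfin _) hLcomp.measure_lt_top.ne] at hz
    rw [hg, ← ENNReal.ofReal_le_iff_le_toReal (hfin _)] at hx hy
    rw [hg, ← ENNReal.ofReal_lt_iff_lt_toReal ht.le (hfin _)]
    exact lt_volume_inter_vadd_combo hn hKcomp hKstrict hLcomp hLstrict (sub_pos.2 hs.2) hs.1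
      (sub_add_cancel 1 s) hxy hz.1 hz.2 (by simpa using ht) hx hy
  have hcont : Continuous g := by
    rw [funext hg]
    exact continuous_volume_inter_vadd volume hKcomp hLcomp.isClosed hLconv
  have hsupp : ∀ x ∉ K - L, g x = 0 := by
    intro x hx
    have : K ∩ (x +ᵥ L) = ∅ := by
      refine eq_empty_of_forall_notMem ?_
      rintro _ ⟨hk, l, hl, rfl⟩
      exact hx ⟨_, hk, l, hl, by simp⟩
    simp [hg, this]
  obtain ⟨k, hk⟩ := hKint
  obtain ⟨l, hl⟩ := hLint
  have hpos : 0 < g (k - l) := by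
    rw [hg]
    refine ENNReal.toReal_pos (Measure.measure_pos_of_nonempty_interior volume ⟨k, ?_⟩).ne' (hfin _)
    rw [interior_inter, interior_vadd]
    exact ⟨hk, l, hl, by simp⟩
  have hKL : IsCompact (K - L) := by
    rw [sub_eq_add_neg]
    exact hKcomp.add hLcomp.neg
  obtain ⟨m, -, hm⟩ := hKL.exists_isMaxOn
    ⟨_, sub_mem_sub (interior_subset hk) (interior_subset hl)⟩ hcont.continuousOn
  have hkl : g (k - l) ≤ g m := hm (sub_mem_sub (interior_subset hk) (interior_subset hl))
  have hmaxm : ∀ y, g y ≤ g m := by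
    intro y
    by_cases hy : y ∈ K - L
    · exact hm hy
    · rw [hsupp y hy]
      exact hpos.le.trans hkl
  refine ⟨⟨m, hmaxm, fun y hy => ?_⟩, fun t ht _ => hlevel t ht⟩
  by_contra hne
  exact (hlevel (g m) (hpos.trans_le hkl) y m hne (hy m) le_rfl (1 / 2)
    ⟨by norm_num, by norm_num⟩).not_ge (hmaxm _)
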